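/- For every n ≥ 1, the number (2n)!/(2^n · n!) of pair partitions of [2n] satisfies (2n)!/(2^n · n!) = Σ_{σ ∈ NC_{2n}} Π_{B ∈ σ} P_{|B|}, where the sum runs over all noncrossing partitions σ of [2n], the product runs over the blocks B of σ, and P_k denotes the number of connected pair partitions of [k] (so P_k = 0 for odd k). -/

import Mathlib

open Finset

open scoped Classical

/-- A partition of `[n]` is noncrossing if there are no two distinct blocks `B₁, B₂`
and elements `a, c ∈ B₁`, `b, d ∈ B₂` with `a < b < c < d`. -/
def IsNoncrossing {n : ℕ} (π : Finpartition (Finset.univ : Finset (Fin n))) : Prop :=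
  ¬ ∃ B₁ ∈ π.parts, ∃ B₂ ∈ π.parts, B₁ ≠ B₂ ∧
      ∃ a ∈ B₁, ∃ b ∈ B₂, ∃ c ∈ B₁, ∃ d ∈ B₂, a < b ∧ b < c ∧ c < d

/-- `S` is a union of blocks of the partition `π`. -/
def IsUnionOfBlocks {n : ℕ} (π : Finpartition (Finset.univ : Finset (Fin n)))
    (S : Finset (Fin n)) : Prop :=
  ∃ P ⊆ π.parts, S = P.sup id

/-- A partition of `[n]` is connected if no proper (nonempty) subinterval of `[n]`
is a union of blocks. -/
def IsConnectedPartition {n : ℕ} (π : Finpartition (Finset.univ : Finset (Fin n))) : Prop :=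
  ∀ i j : Fin n, i ≤ j → Finset.Icc i j ≠ Finset.univ → ¬ IsUnionOfBlocks π (Finset.Icc i j)

/-- A partition of `[n]` is irreducible if no proper initial segment `{1,…,k}`, `1 ≤ k < n`,
is a union of blocks. -/
def IsIrreduciblePartition {n : ℕ} (π : Finpartition (Finset.univ : Finset (Fin n))) : Prop :=
  ∀ k : Fin n, (k : ℕ) + 1 < n → ¬ IsUnionOfBlocks π (Finset.Iic k)

/-- An interval partition of `[n]` is a partition all of whose blocks are intervals
of consecutive integers. -/
def IsIntervalPartition {n : ℕ} (π : Finpartition (Finset.univ : Finset (Fin n))) : Prop :=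
  ∀ B ∈ π.parts, ∃ i j : Fin n, B = Finset.Icc i j

/-- `a_π = ∏_{B ∈ π} a_{|B|}`. -/
noncomputable def partWeight {n : ℕ} (a : ℕ → ℝ)
    (π : Finpartition (Finset.univ : Finset (Fin n))) : ℝ :=
  ∏ B ∈ π.parts, a B.card

/-- The number of connected pair partitions of `[k]` (equal to `0` for odd `k`). -/
noncomputable def connPairCount (k : ℕ) : ℕ :=
  Nat.card {π : Finpartition (Finset.univ : Finset (Fin k)) //
    IsConnectedPartition π ∧ ∀ B ∈ π.parts, B.card = 2}

/-- A pairing of a type, encoded as a fixed-point-free involution. -/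
def IsPairing {α : Type*} (f : α → α) : Prop :=
  ∀ x, f (f x) = x ∧ f x ≠ x

/-- A self-map of a linear order is connected if no proper nonempty closed interval is
mapped into itself. -/
def IsConnectedMap {α : Type*} [LinearOrder α] (f : α → α) : Prop :=
  ∀ i j, i ≤ j → (∀ x, i ≤ x → x ≤ j → i ≤ f x ∧ f x ≤ j) → ∀ y, i ≤ y ∧ y ≤ j

/-- A noncrossing equivalence relation whose classes are preserved by `f`, such that `f` is
connected on each class. -/
structure IsConnectedClosure {α : Type*} [LinearOrder α] (f : α → α) (r : Setoid α) : Prop where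
  noncrossing : ∀ a b c d, a < b → b < c → c < d → r a c → r b d → r a b
  rel_map : ∀ x, r x (f x)
  connected : ∀ i j, i ≤ j → r i j →
    (∀ x, r i x → i ≤ x → x ≤ j → i ≤ f x ∧ f x ≤ j) → ∀ y, r i y → i ≤ y ∧ y ≤ j

namespace IsConnectedClosure

variable {α : Type*} [LinearOrder α] [Fintype α] {f : α → α}

theorem le_of_isConnectedClosure {r s : Setoid α} (hr : IsConnectedClosure f r)
    (hs : IsConnectedClosure f s) : r ≤ s := by
  intro a b hab
  -- the hulls `[i, j]` of the classes of `s` inside the class of `a`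
  let Q : α × α → Prop := fun p =>
    p.1 ≤ p.2 ∧ r a p.1 ∧ r a p.2 ∧ s p.1 p.2 ∧ ∀ x, r a x → s p.1 x → p.1 ≤ x ∧ x ≤ p.2
  have exists_hull : ∀ x, r a x → ∃ p, Q p ∧ s x p.1 := by
    intro x hx
    let C : Finset α := Finset.univ.filter fun y => r a y ∧ s x y
    have hC : C.Nonempty := ⟨x, by simp [C, hx]⟩
    have hmin := C.min'_mem hC
    have hmax := C.max'_mem hC
    simp only [C, Finset.mem_filter, Finset.mem_univ, true_and] at hmin hmax
    refine ⟨(C.min' hC, C.max' hC), ⟨C.min'_le_max' hC, hmin.1, hmax.1,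
      s.trans (s.symm hmin.2) hmax.2, fun y hy hxy => ?_⟩, hmin.2⟩
    have hyC : y ∈ C := by
      simp only [C, Finset.mem_filter, Finset.mem_univ, true_and]
      exact ⟨hy, s.trans hmin.2 hxy⟩
    exact ⟨C.min'_le y hyC, C.le_max' y hyC⟩
  obtain ⟨p₀, hp₀, -⟩ := exists_hull a (r.refl a)
  obtain ⟨⟨i, j⟩, hQ, hleast⟩ := Set.exists_min_image {p | Q p}
    (fun p : α × α => (Finset.univ.filter fun x => p.1 ≤ x ∧ x ≤ p.2).card)
    (Set.toFinite _) ⟨p₀, hp₀⟩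
  obtain ⟨hij, hai, haj, sij, hull⟩ := hQ
  have interval : ∀ x, r a x → i ≤ x → x ≤ j → s i x := by
    intro x hx hix hxj
    by_contra hn
    have hix' : i < x := lt_of_le_of_ne hix (by rintro rfl; exact hn (s.refl _))
    have hxj' : x < j := lt_of_le_of_ne hxj (by rintro rfl; exact hn sij)
    obtain ⟨⟨i', j'⟩, hQ', hxi'⟩ := exists_hull x hx
    obtain ⟨hij', hai', haj', sij', -⟩ := id hQ'
    have inside : ∀ y, s x y → i < y ∧ y < j := by
      intro y hxy
      constructor
      · by_contra! h
        rcases h.eq_or_lt with rfl | h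
        · exact hn (s.symm hxy)
        · exact hn (s.trans (s.symm (hs.noncrossing y i x j h hix' hxj' (s.symm hxy) sij))
            (s.symm hxy))
      · by_contra! h
        rcases h.eq_or_lt with rfl | h
        · exact hn (s.trans sij (s.symm hxy))
        · exact hn (hs.noncrossing i x j y hix' hxj' h sij hxy)
    have h1 := inside i' hxi'
    have h2 := inside j' (s.trans hxi' sij')
    have hlt : (Finset.univ.filter fun x => i' ≤ x ∧ x ≤ j').card
        < (Finset.univ.filter fun x => i ≤ x ∧ x ≤ j).card := by
      refine Finset.card_lt_card ((Finset.ssubset_iff_of_subset fun z hz => ?_).2 ⟨i, ?_, ?_⟩)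
      · simp only [Finset.mem_filter, Finset.mem_univ, true_and] at hz ⊢
        exact ⟨h1.1.le.trans hz.1, hz.2.trans h2.2.le⟩
      · simpa using hij
      · simp [h1.1]
    exact absurd (hleast _ hQ') (not_le.2 hlt)
  have all : ∀ y, r i y → i ≤ y ∧ y ≤ j := by
    refine hr.connected i j hij (r.trans (r.symm hai) haj) fun x hix h1 h2 => ?_
    have hax := r.trans hai hix
    exact hull _ (r.trans hax (hr.rel_map x)) (s.trans (interval x hax h1 h2) (hs.rel_map x))
  have rel : ∀ y, r a y → s i y := fun y hy =>
    interval y hy (all y (r.trans (r.symm hai) hy)).1 (all y (r.trans (r.symm hai) hy)).2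
  exact s.trans (s.symm (rel a (r.refl a))) (rel b hab)

theorem exists_of_involutive (hf : ∀ x, f (f x) = x) : ∃ r, IsConnectedClosure f r := by
  have : Finite (Setoid α) :=
    Finite.of_injective (fun (r : Setoid α) (x y : α) => r x y)
      fun r s h => Setoid.ext fun x y => by rw [show r x y = s x y from congrFun₂ h x y]
  obtain ⟨r, ⟨hnc, hmap⟩, hmin⟩ := exists_minimal_of_wellFoundedLT
    (fun r : Setoid α => (∀ a b c d, a < b → b < c → c < d → r a c → r b d → r a b) ∧
      ∀ x, r x (f x)) ⟨⊤, by simp [Setoid.top_def]⟩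
  refine ⟨r, hnc, hmap, fun i j hij hrij hI => ?_⟩
  let s : Setoid α :=
    { r := fun x z => r x z ∧ (r i x → ((i ≤ x ∧ x ≤ j) ↔ (i ≤ z ∧ z ≤ j)))
      iseqv :=
        { refl := fun x => ⟨r.refl x, fun _ => Iff.rfl⟩
          symm := fun {x z} h => ⟨r.symm h.1, fun hz => (h.2 (r.trans hz (r.symm h.1))).symm⟩
          trans := fun {x y z} h h' => ⟨r.trans h.1 h'.1,
            fun hx => (h.2 hx).trans (h'.2 (r.trans hx h.1))⟩ } }
  have hs_def : ∀ x z, s x z ↔ r x z ∧ (r i x → ((i ≤ x ∧ x ≤ j) ↔ (i ≤ z ∧ z ≤ j))) :=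
    fun _ _ => Iff.rfl
  have hsr : s ≤ r := fun {x y} h => ((hs_def x y).1 h).1
  have hrs : r ≤ s := by
    refine hmin ⟨fun a b c d hab hbc hcd hac hbd => ?_, fun x => ?_⟩ hsr
    · rw [hs_def] at hac hbd ⊢
      have h := hnc a b c d hab hbc hcd hac.1 hbd.1
      refine ⟨h, fun hia => ?_⟩
      have h1 := hac.2 hia
      have h2 := hbd.2 (r.trans hia h)
      constructor
      · intro ha
        exact ⟨ha.1.trans hab.le, hbc.le.trans (h1.1 ha).2⟩
      · intro hb
        have hd := h2.1 hb
        exact h1.2 ⟨hb.1.trans hbc.le, hcd.le.trans hd.2⟩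
    · rw [hs_def]
      refine ⟨hmap x, fun hix => ⟨fun h => hI x hix h.1 h.2, fun h => ?_⟩⟩
      have := hI (f x) (r.trans hix (hmap x)) h.1 h.2
      rwa [hf] at this
  intro y hy
  exact (((hs_def i y).1 (hrs hy)).2 (r.refl i)).1 ⟨le_rfl, hij⟩

end IsConnectedClosure

/-- The equivalence relation whose classes are the pairs `{x, f x}`. -/
def IsPairing.setoid {α : Type*} {f : α → α} (hf : IsPairing f) : Setoid α where
  r x y := y = x ∨ y = f x
  iseqv :=
    { refl := fun _ => Or.inl rfl
      symm := by
        rintro x y (rfl | rfl)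
        · exact Or.inl rfl
        · exact Or.inr (hf x).1.symm
      trans := by
        rintro x y z (rfl | rfl) (rfl | rfl)
        · exact Or.inl rfl
        · exact Or.inr rfl
        · exact Or.inr rfl
        · exact Or.inl (hf x).1 }

theorem Finpartition.ker_part_iff_mem {n : ℕ}
    (σ : Finpartition (Finset.univ : Finset (Fin n))) (x y : Fin n) :
    Setoid.ker σ.part x y ↔ y ∈ σ.part x := by
  rw [Setoid.ker_def, eq_comm,
    σ.mem_part_iff_part_eq_part (Finset.mem_univ y) (Finset.mem_univ x)]

theorem Finpartition.ext_part {n : ℕ} {π ρ : Finpartition (Finset.univ : Finset (Fin n))}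
    (h : ∀ x y, y ∈ π.part x ↔ y ∈ ρ.part x) : π = ρ := by
  have key : ∀ {π ρ : Finpartition (Finset.univ : Finset (Fin n))},
      (∀ x y, y ∈ π.part x ↔ y ∈ ρ.part x) → π.parts ⊆ ρ.parts := by
    intro π ρ h B hB
    obtain ⟨x, hx⟩ := π.nonempty_of_mem_parts hB
    rw [← π.part_eq_of_mem hB hx, show π.part x = ρ.part x from Finset.ext (h x)]
    exact ρ.part_mem.2 (Finset.mem_univ x)
  exact Finpartition.ext (Finset.Subset.antisymm (key h) (key fun x y => (h x y).symm))

theorem isUnionOfBlocks_iff {n : ℕ} (π : Finpartition (Finset.univ : Finset (Fin n)))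
    (S : Finset (Fin n)) : IsUnionOfBlocks π S ↔ ∀ x ∈ S, π.part x ⊆ S := by
  constructor
  · rintro ⟨P, hP, rfl⟩ x hx
    obtain ⟨B, hB, hxB⟩ := Finset.mem_sup.1 hx
    rw [π.part_eq_of_mem (hP hB) hxB]
    exact Finset.le_sup (f := id) hB
  · intro h
    refine ⟨π.parts.filter (· ⊆ S), Finset.filter_subset _ _, ?_⟩
    ext x
    rw [Finset.mem_sup]
    constructor
    · intro hx
      exact ⟨π.part x, Finset.mem_filter.2 ⟨π.part_mem.2 (Finset.mem_univ x), h x hx⟩,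
        π.mem_part_self.2 (Finset.mem_univ x)⟩
    · rintro ⟨B, hB, hx⟩
      exact (Finset.mem_filter.1 hB).2 hx

theorem connPairCount_eq_card_isPairing (k : ℕ) :
    connPairCount k = Nat.card {f : Fin k → Fin k // IsPairing f ∧ IsConnectedMap f} := by
  have part_eq : ∀ (f : Fin k → Fin k) (hf : IsPairing f) (x : Fin k),
      (Finpartition.ofSetoid hf.setoid).part x = {x, f x} := by
    intro f hf x
    ext y
    rw [Finpartition.mem_part_ofSetoid_iff_rel]
    simp only [Finset.mem_insert, Finset.mem_singleton]
    exact Iff.rfl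
  have conn_iff : ∀ (f : Fin k → Fin k) (π : Finpartition (Finset.univ : Finset (Fin k))),
      (∀ x, π.part x = {x, f x}) → (IsConnectedPartition π ↔ IsConnectedMap f) := by
    intro f π h
    refine forall₂_congr fun i j => forall_congr' fun _ => ?_
    rw [isUnionOfBlocks_iff, not_imp_not, Finset.eq_univ_iff_forall]
    simp only [h, Finset.insert_subset_iff, Finset.singleton_subset_iff, Finset.mem_Icc]
    refine imp_congr (forall_congr' fun x => ?_) Iff.rfl
    tauto
  symm
  refine Nat.card_eq_of_bijective (fun f : {f : Fin k → Fin k // IsPairing f ∧ IsConnectedMap f} =>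
    (⟨Finpartition.ofSetoid f.2.1.setoid, (conn_iff f.1 _ (part_eq f.1 f.2.1)).2 f.2.2,
      fun B hB => ?_⟩ : {π : Finpartition (Finset.univ : Finset (Fin k)) //
        IsConnectedPartition π ∧ ∀ B ∈ π.parts, B.card = 2})) ⟨?_, ?_⟩
  · obtain ⟨x, hx⟩ := Finpartition.nonempty_of_mem_parts _ hB
    rw [← Finpartition.part_eq_of_mem _ hB hx, part_eq]
    exact Finset.card_pair (f.2.1 x).2.symm
  · intro f g hfg
    refine Subtype.ext (funext fun x => ?_)
    have h := congrArg (fun π => π.1.part x) hfg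
    simp only [part_eq] at h
    have hx : f.1 x ∈ ({x, g.1 x} : Finset (Fin k)) := h ▸ by simp
    simpa [(f.2.1 x).2] using hx
  · rintro ⟨π, hconn, hpair⟩
    have hex : ∀ x, ∃ y, y ≠ x ∧ π.part x = {x, y} := by
      intro x
      obtain ⟨a, b, hab, h⟩ := Finset.card_eq_two.1
        (hpair _ (π.part_mem.2 (Finset.mem_univ x)))
      have hx : x ∈ π.part x := π.mem_part_self.2 (Finset.mem_univ x)
      rw [h, Finset.mem_insert, Finset.mem_singleton] at hx
      rcases hx with rfl | rfl
      · exact ⟨b, hab.symm, h⟩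
      · exact ⟨a, hab, h.trans (Finset.pair_comm _ _)⟩
    choose f hne hpart using hex
    have hf : IsPairing f := by
      refine fun x => ⟨?_, hne x⟩
      have hmem : f x ∈ π.part x := by simp [hpart]
      have h := π.part_eq_of_mem (π.part_mem.2 (Finset.mem_univ x)) hmem
      have hx : f (f x) ∈ π.part x := by rw [← h, hpart (f x)]; simp
      rw [hpart x, Finset.mem_insert, Finset.mem_singleton] at hx
      exact hx.resolve_right (hne (f x))
    refine ⟨⟨f, hf, (conn_iff f π hpart).1 hconn⟩, Subtype.ext (Finpartition.ext_part ?_)⟩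
    intro x y
    simp only [part_eq, hpart]

theorem connPairCount_card_eq_card_isPairing {α : Type*} [LinearOrder α] (B : Finset α) :
    connPairCount B.card = Nat.card {f : B → B // IsPairing f ∧ IsConnectedMap f} := by
  rw [connPairCount_eq_card_isPairing]
  let e : Fin B.card ≃o B := B.orderIsoOfFin rfl
  refine Nat.card_congr ((e.toEquiv.arrowCongr e.toEquiv).subtypeEquiv fun f => ?_)
  refine and_congr ?_ ?_
  · refine e.toEquiv.forall_congr fun x => ?_
    simp
  · refine e.toEquiv.forall_congr fun i => e.toEquiv.forall_congr fun j => ?_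
    refine imp_congr (by simp) (imp_congr ?_ ?_)
    · refine e.toEquiv.forall_congr fun x => ?_
      simp
    · refine e.toEquiv.forall_congr fun x => ?_
      simp

theorem prod_connPairCount {n : ℕ} (σ : Finpartition (Finset.univ : Finset (Fin n))) :
    ∏ B ∈ σ.parts, connPairCount B.card = Nat.card {f : Fin n → Fin n // IsPairing f ∧
      (∀ x, f x ∈ σ.part x) ∧ ∀ i j, i ≤ j → j ∈ σ.part i →
        (∀ x ∈ σ.part i, i ≤ x → x ≤ j → i ≤ f x ∧ f x ≤ j) →
        ∀ y ∈ σ.part i, i ≤ y ∧ y ≤ j} := by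
  have part_mem : ∀ x, σ.part x ∈ σ.parts := fun x => σ.part_mem.2 (Finset.mem_univ x)
  have self_mem : ∀ x, x ∈ σ.part x := fun x => σ.mem_part_self.2 (Finset.mem_univ x)
  simp only [connPairCount_card_eq_card_isPairing]
  rw [← Finset.prod_coe_sort, ← Nat.card_pi]
  symm
  have glue : ∀ (g : ∀ B : σ.parts, {f : B.1 → B.1 // IsPairing f ∧ IsConnectedMap f})
      (B : σ.parts) (x : Fin n) (hx : x ∈ B.1),
      ((g ⟨σ.part x, part_mem x⟩).1 ⟨x, self_mem x⟩).1 = ((g B).1 ⟨x, hx⟩).1 := by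
    rintro g ⟨B, hB⟩ x hx
    obtain rfl := σ.part_eq_of_mem hB hx
    rfl
  refine Nat.card_congr
    { toFun := fun f B =>
        ⟨fun x => ⟨f.1 x.1, (σ.part_eq_of_mem B.2 x.2).le (f.2.2.1 x.1)⟩, ?_, ?_⟩
      invFun := fun g =>
        ⟨fun x => ((g ⟨σ.part x, part_mem x⟩).1 ⟨x, self_mem x⟩).1, ?_, ?_, ?_⟩
      left_inv := fun f => rfl
      right_inv := fun g => ?_ }
  · exact fun x => ⟨Subtype.ext (f.2.1 x.1).1, fun h => (f.2.1 x.1).2 (congrArg Subtype.val h)⟩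
  · obtain ⟨B, hB⟩ := B
    rintro ⟨i, hi⟩ ⟨j, hj⟩ hij h ⟨y, hy⟩
    obtain rfl := σ.part_eq_of_mem hB hi
    exact f.2.2.2 i j hij hj (fun x hx h1 h2 => h ⟨x, hx⟩ h1 h2) y hy
  · intro x
    have h := (g ⟨σ.part x, part_mem x⟩).2.1 ⟨x, self_mem x⟩
    refine ⟨?_, fun hx => h.2 (Subtype.ext hx)⟩
    exact (glue g ⟨σ.part x, part_mem x⟩ _ (Subtype.prop _)).trans (congrArg Subtype.val h.1)
  · exact fun x => Subtype.prop _
  · intro i j hij hj h y hy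
    refine (g ⟨σ.part i, part_mem i⟩).2.2 ⟨i, self_mem i⟩ ⟨j, hj⟩ hij (fun x h1 h2 => ?_) ⟨y, hy⟩
    have hx := h x.1 x.2 h1 h2
    beta_reduce at hx
    rw [glue g ⟨σ.part i, part_mem i⟩ x.1 x.2] at hx
    exact hx
  · funext B
    exact Subtype.ext (funext fun x => Subtype.ext (glue g B x.1 x.2))

theorem cycleType_eq_replicate_iff (n : ℕ) (g : Equiv.Perm (Fin (2 * n))) :
    g.cycleType = Multiset.replicate n 2 ↔ IsPairing g := by
  constructor
  · intro h
    have hsupp : g.support = Finset.univ := by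
      rw [← Finset.card_eq_iff_eq_univ, ← g.sum_cycleType, h]
      simp [mul_comm]
    have hord : g ^ 2 = 1 := by
      refine orderOf_dvd_iff_pow_eq_one.1 ?_
      rw [← g.lcm_cycleType, h]
      exact Multiset.lcm_dvd.2 fun b hb => (Multiset.eq_of_mem_replicate hb).dvd
    intro x
    refine ⟨?_, Equiv.Perm.mem_support.1 (hsupp ▸ Finset.mem_univ x)⟩
    have := Equiv.congr_fun hord x
    rwa [pow_two] at this
  · intro h
    have hord : g ^ 2 = 1 := by
      ext1 x
      rw [pow_two]
      exact (h x).1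
    have htwo : ∀ b ∈ g.cycleType, b = 2 := fun b hb =>
      le_antisymm (Nat.le_of_dvd two_pos ((Equiv.Perm.dvd_of_mem_cycleType hb).trans
        (orderOf_dvd_of_pow_eq_one hord))) (Equiv.Perm.two_le_of_mem_cycleType hb)
    have hsupp : g.support = Finset.univ :=
      Finset.eq_univ_of_forall fun x => Equiv.Perm.mem_support.2 (h x).2
    have hrep := Multiset.eq_replicate_of_mem htwo
    have hsum := g.sum_cycleType
    rw [hsupp, hrep, Multiset.sum_replicate, Finset.card_univ, Fintype.card_fin] at hsum
    rw [hrep, show g.cycleType.card = n by rw [smul_eq_mul] at hsum; omega]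

theorem card_isPairing (n : ℕ) :
    Nat.card {f : Fin (2 * n) → Fin (2 * n) // IsPairing f} * (2 ^ n * n.factorial)
      = (2 * n).factorial := by
  have e : {f : Fin (2 * n) → Fin (2 * n) // IsPairing f} ≃
      {g : Equiv.Perm (Fin (2 * n)) // g.cycleType = Multiset.replicate n 2} :=
    { toFun := fun f => ⟨Function.Involutive.toPerm f.1 fun x => (f.2 x).1,
        (cycleType_eq_replicate_iff n _).2 f.2⟩
      invFun := fun g => ⟨g.1, (cycleType_eq_replicate_iff n _).1 g.2⟩
      left_inv := fun f => rfl
      right_inv := fun g => Subtype.ext (Equiv.ext fun x => rfl) }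
  have h := Equiv.Perm.card_of_cycleType_mul_eq (Fin (2 * n)) (Multiset.replicate n 2)
  rw [if_pos ⟨by simp [mul_comm], fun a ha => (Multiset.eq_of_mem_replicate ha).ge⟩] at h
  rw [Nat.card_congr e, Nat.card_eq_fintype_card, Fintype.card_subtype]
  rcases n.eq_zero_or_pos with rfl | hn
  · simpa using h
  · simpa [Multiset.toFinset_replicate, hn.ne', mul_comm n 2] using h

theorem isConnectedClosure_ker_part_iff {n : ℕ} (f : Fin n → Fin n)
    (σ : Finpartition (Finset.univ : Finset (Fin n))) :
    IsConnectedClosure f (Setoid.ker σ.part) ↔ IsNoncrossing σ ∧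
      (∀ x, f x ∈ σ.part x) ∧ ∀ i j, i ≤ j → j ∈ σ.part i →
        (∀ x ∈ σ.part i, i ≤ x → x ≤ j → i ≤ f x ∧ f x ≤ j) →
        ∀ y ∈ σ.part i, i ≤ y ∧ y ≤ j := by
  have noncrossing_iff : IsNoncrossing σ ↔ ∀ a b c d, a < b → b < c → c < d →
      Setoid.ker σ.part a c → Setoid.ker σ.part b d → Setoid.ker σ.part a b := by
    constructor
    · intro h a b c d hab hbc hcd hac hbd
      by_contra hne
      exact h ⟨σ.part a, σ.part_mem.2 (Finset.mem_univ a), σ.part b,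
        σ.part_mem.2 (Finset.mem_univ b), hne, a, σ.mem_part_self.2 (Finset.mem_univ a), b,
        σ.mem_part_self.2 (Finset.mem_univ b), c, (σ.ker_part_iff_mem a c).1 hac, d,
        (σ.ker_part_iff_mem b d).1 hbd, hab, hbc, hcd⟩
    · rintro h ⟨B, hB, C, hC, hne, a, ha, b, hb, c, hc, d, hd, hab, hbc, hcd⟩
      have hac : σ.part a = σ.part c := by rw [σ.part_eq_of_mem hB ha, σ.part_eq_of_mem hB hc]
      have hbd : σ.part b = σ.part d := by rw [σ.part_eq_of_mem hC hb, σ.part_eq_of_mem hC hd]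
      have hab' : σ.part a = σ.part b := h a b c d hab hbc hcd hac hbd
      rw [σ.part_eq_of_mem hB ha, σ.part_eq_of_mem hC hb] at hab'
      exact hne hab'
  rw [noncrossing_iff]
  simp only [← Finpartition.ker_part_iff_mem]
  exact ⟨fun h => ⟨h.1, h.2, h.3⟩, fun h => ⟨h.1, h.2.1, h.2.2⟩⟩

theorem IsPairing.existsUnique_isConnectedClosure {n : ℕ} {f : Fin n → Fin n}
    (hf : IsPairing f) : ∃! σ : Finpartition (Finset.univ : Finset (Fin n)),
      IsConnectedClosure f (Setoid.ker σ.part) := by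
  obtain ⟨r, hr⟩ := IsConnectedClosure.exists_of_involutive fun x => (hf x).1
  refine ⟨Finpartition.ofSetoid r, ?_, fun σ hσ => Finpartition.ext_part fun x y => ?_⟩
  · have h : Setoid.ker (Finpartition.ofSetoid r).part = r := by
      ext x y
      rw [Finpartition.ker_part_iff_mem, Finpartition.mem_part_ofSetoid_iff_rel]
    rwa [← h] at hr
  · rw [← Finpartition.ker_part_iff_mem, Finpartition.mem_part_ofSetoid_iff_rel]
    exact ⟨fun h => hσ.le_of_isConnectedClosure hr h, fun h => hr.le_of_isConnectedClosure hσ h⟩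

theorem card_isPairing_eq_sum_isNoncrossing (n : ℕ) :
    Nat.card {f : Fin n → Fin n // IsPairing f}
      = ∑ σ ∈ Finset.univ.filter
          (fun σ : Finpartition (Finset.univ : Finset (Fin n)) => IsNoncrossing σ),
        ∏ B ∈ σ.parts, connPairCount B.card := by
  have hsum : ∀ σ ∈ Finset.univ.filter
      (fun σ : Finpartition (Finset.univ : Finset (Fin n)) => IsNoncrossing σ),
      ∏ B ∈ σ.parts, connPairCount B.card = ∑ f : {f : Fin n → Fin n // IsPairing f},
        if IsConnectedClosure f.1 (Setoid.ker σ.part) then 1 else 0 := by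
    intro σ hσ
    have hσ := (Finset.mem_filter.1 hσ).2
    rw [prod_connPairCount, Finset.sum_boole, Nat.cast_id, ← Fintype.card_subtype,
      ← Nat.card_eq_fintype_card]
    refine Nat.card_congr ((Equiv.subtypeEquivRight fun f => ?_).trans
      (Equiv.subtypeSubtypeEquivSubtypeInter IsPairing
        fun f => IsConnectedClosure f (Setoid.ker σ.part)).symm)
    rw [isConnectedClosure_ker_part_iff]
    exact and_congr_right fun _ => (and_iff_right hσ).symm
  rw [Finset.sum_congr rfl hsum, Finset.sum_comm, Nat.card_eq_fintype_card, Fintype.card,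
    Finset.card_eq_sum_ones]
  refine Finset.sum_congr rfl fun f _ => ?_
  obtain ⟨σ, hσ, huniq⟩ := f.2.existsUnique_isConnectedClosure
  rw [Finset.sum_eq_single σ, if_pos hσ]
  · exact fun τ _ hne => if_neg fun h => hne (huniq τ h)
  · exact fun h => absurd (Finset.mem_filter.2
      ⟨Finset.mem_univ σ, ((isConnectedClosure_ker_part_iff f.1 σ).1 hσ).1⟩) h

/-- The number `(2n)!/(2^n n!)` of pair partitions of `[2n]` equals the sum over noncrossing
partitions `σ` of `[2n]` of the product over blocks `B` of `σ` of the number of connected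
pair partitions of `[|B|]`. -/
theorem pairings_eq_sum_noncrossing_prod_connected_pairings :
    ∀ n : ℕ, 1 ≤ n →
      ((2 * n).factorial : ℝ) / (2 ^ n * n.factorial)
        = ∑ σ ∈ Finset.univ.filter
            (fun σ : Finpartition (Finset.univ : Finset (Fin (2 * n))) => IsNoncrossing σ),
          ∏ B ∈ σ.parts, (connPairCount B.card : ℝ) := by
  intro n _
  have hne : (2 : ℝ) ^ n * n.factorial ≠ 0 := by positivity
  rw [div_eq_iff hne, ← card_isPairing n, card_isPairing_eq_sum_isNoncrossing]
  push_cast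
  rfl
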